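/- Let H = C ∗ D be a free product of finitely generated groups C and D, each with infinite abelianization. Then for every proper word w, the verbal set w[H] is not rational in H. -/

import Mathlib

open Pointwise

/-- The verbal set `w[G]`: all values of the word `w` in `G`. -/
def verbalSet (w : FreeGroup ℕ) (G : Type*) [Group G] : Set G :=
  {g | ∃ φ : FreeGroup ℕ →* G, φ w = g}

/-- Exponent sums of a word in the generators, as a finitely supported function. -/
noncomputable def expSum (w : FreeGroup ℕ) : ℕ →₀ ℤ :=
  Multiplicative.toAdd
    ((FreeGroup.lift fun i => Multiplicative.ofAdd (Finsupp.single i (1 : ℤ))) w)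

/-- `e(w)`: the gcd of the exponent sums of the generators in `w` (0 if all are 0). -/
noncomputable def eWord (w : FreeGroup ℕ) : ℕ :=
  (expSum w).support.gcd fun i => ((expSum w) i).natAbs

/-- A word is proper if `w[G] ≠ {1}` and `w[H] ≠ H` for some groups `G`, `H`. -/
def IsProperWord (w : FreeGroup ℕ) : Prop :=
  ∃ (G : Type) (_ : Group G) (H : Type) (_ : Group H),
    verbalSet w G ≠ {1} ∧ verbalSet w H ≠ Set.univ

/-- Rational subsets of a monoid: the smallest family containing the finite sets and
closed under union, product and submonoid generation (Kleene star). -/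
inductive IsRational {M : Type*} [Monoid M] : Set M → Prop
  | finite (s : Set M) (h : s.Finite) : IsRational s
  | union {s t : Set M} : IsRational s → IsRational t → IsRational (s ∪ t)
  | mul {s t : Set M} : IsRational s → IsRational t → IsRational (s * t)
  | star {s : Set M} : IsRational s → IsRational (Submonoid.closure s : Set M)

/-!
In the Cayley tree of a free group `F`, the Fox derivative `∂g/∂a` records the `a`-labelled edges
crossed by the path of `g`. It is a 1-cocycle, and this forces a rational set `S` to be cut along
these edges in only finitely many ways, as by the states of an automaton. Hence an element of `S`
with a syllable `aᵏ`, `|k|` large, stays in `S` when some positive power of `a` is inserted there.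

A proper verbal set `w[F]` cannot be pumped in this way. If `e(w) = 0`, then `w[F]` is closed
under conjugation and has exponent sum `0` in `a`; but for `1 ≠ g ∈ w[F]` and large `n` the
element `aⁿ g a⁻ⁿ` begins with a long syllable, and pumping it changes the exponent sum. If
`e(w) ≥ 2`, count for every `k ≥ 1` the syllables `aᵏ` of `g` with sign. Up to cancellation in
pairs, a product creates or destroys at most three syllables, so on `w[F]` this vector-valued
quasimorphism is divisible by `e(w)` at all but boundedly many `k`. But `w[F]` contains the
powers of `aⁿb` of exponent divisible by `e(w)`, and pumping all their syllables to distinct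
lengths makes arbitrarily many of its coordinates equal to `1`.

Finally, `C ∗ D` maps onto `ℤ ∗ ℤ`, and a surjective homomorphism maps rational sets to rational
sets and verbal sets onto verbal sets.
-/

attribute [local instance] Finsupp.comapDistribMulAction

open groupCohomology

section Cuts

theorem mem_support_or_mem_support_of_mul {G X A : Type*} [Group G] [MulAction G X] [AddCommGroup A]
    {E : G → X →₀ A} (hE : IsCocycle₁ E) {g h : G} {x : X} (hx : x ∈ (E (g * h)).support) :
    x ∈ (E g).support ∨ g⁻¹ • x ∈ (E h).support := by
  simp only [Finsupp.mem_support_iff] at hx ⊢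
  by_contra! hzero
  exact hx (by rw [hE, Finsupp.add_apply, Finsupp.comapSMul_apply, hzero.1, hzero.2, add_zero])

variable {G A : Type*} [Group G] [AddCommGroup A] {E : G → G →₀ A} {S T : Set G}

theorem exists_mul_mul_eq_of_mem_closure (hE : IsCocycle₁ E) {g x : G}
    (hg : g ∈ Submonoid.closure S) (hx : x ∈ (E g).support) :
    ∃ u ∈ Submonoid.closure S, ∃ s ∈ S, ∃ v ∈ Submonoid.closure S,
      u * s * v = g ∧ u⁻¹ * x ∈ (E s).support := by
  induction hg using Submonoid.closure_induction generalizing x with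
  | mem g hg => exact ⟨1, one_mem _, g, hg, 1, one_mem _, by simp, by simpa using hx⟩
  | one => simp [map_one_of_isCocycle₁ hE] at hx
  | mul g h hg hh ihg ihh =>
    rcases mem_support_or_mem_support_of_mul hE hx with hx | hx
    · obtain ⟨u, hu, s, hs, v, hv, rfl, hmem⟩ := ihg hx
      exact ⟨u, hu, s, hs, v * h, mul_mem hv hh, by simp only [mul_assoc], hmem⟩
    · obtain ⟨u, hu, s, hs, v, hv, rfl, hmem⟩ := ihh hx
      exact ⟨g * u, mul_mem hg hu, s, hs, v, hv, by simp only [mul_assoc],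
        by simpa [mul_assoc] using hmem⟩

/-- There are finitely many pairs `(P, Q)` with `P * Q ⊆ S` such that each element `g` of `S`, cut
at any point of the support of `E g`, factors through one of them. If `E g` records the edges
crossed by the path of `g` in the Cayley tree, this is the finiteness of the set of states of an
automaton accepting `S`. -/
def HasFiniteCuts (E : G → G →₀ A) (S : Set G) : Prop :=
  ∃ 𝓒 : Set (Set G × Set G), 𝓒.Finite ∧ (∀ p ∈ 𝓒, p.1 * p.2 ⊆ S) ∧
    ∀ g ∈ S, ∀ x ∈ (E g).support, ∃ p ∈ 𝓒, x ∈ p.1 ∧ x⁻¹ * g ∈ p.2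

namespace HasFiniteCuts

theorem of_finite (E : G → G →₀ A) (hS : S.Finite) : HasFiniteCuts E S := by
  refine ⟨⋃ g ∈ S, (fun x => ({x}, {x⁻¹ * g})) '' (E g).support,
    hS.biUnion fun g _ => (E g).support.finite_toSet.image _, ?_, ?_⟩
  · simp only [Set.mem_iUnion₂]
    rintro _ ⟨g, hg, x, -, rfl⟩
    simpa using hg
  · exact fun g hg x hx => ⟨_, Set.mem_biUnion hg ⟨x, hx, rfl⟩, rfl, rfl⟩

theorem union (hS : HasFiniteCuts E S) (hT : HasFiniteCuts E T) : HasFiniteCuts E (S ∪ T) := by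
  obtain ⟨𝓢, h𝓢, hmulS, hcutS⟩ := hS
  obtain ⟨𝓣, h𝓣, hmulT, hcutT⟩ := hT
  refine ⟨𝓢 ∪ 𝓣, h𝓢.union h𝓣, ?_, ?_⟩
  · rintro p (hp | hp)
    · exact (hmulS p hp).trans Set.subset_union_left
    · exact (hmulT p hp).trans Set.subset_union_right
  · rintro g (hg | hg) x hx
    · obtain ⟨p, hp, hcut⟩ := hcutS g hg x hx
      exact ⟨p, .inl hp, hcut⟩
    · obtain ⟨p, hp, hcut⟩ := hcutT g hg x hx
      exact ⟨p, .inr hp, hcut⟩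

theorem mul (hE : IsCocycle₁ E) (hS : HasFiniteCuts E S) (hT : HasFiniteCuts E T) :
    HasFiniteCuts E (S * T) := by
  obtain ⟨𝓢, h𝓢, hmulS, hcutS⟩ := hS
  obtain ⟨𝓣, h𝓣, hmulT, hcutT⟩ := hT
  refine ⟨(fun p => (p.1, p.2 * T)) '' 𝓢 ∪ (fun p => (S * p.1, p.2)) '' 𝓣,
    (h𝓢.image _).union (h𝓣.image _), ?_, ?_⟩
  · rintro _ (⟨p, hp, rfl⟩ | ⟨p, hp, rfl⟩)
    · exact (mul_assoc p.1 p.2 T).symm.trans_subset (Set.mul_subset_mul_right (hmulS p hp))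
    · exact (mul_assoc S p.1 p.2).trans_subset (Set.mul_subset_mul_left (hmulT p hp))
  · rintro _ ⟨s, hs, t, ht, rfl⟩ x hx
    rcases mem_support_or_mem_support_of_mul hE hx with hx | hx
    · obtain ⟨p, hp, hleft, hright⟩ := hcutS s hs x hx
      exact ⟨_, .inl ⟨p, hp, rfl⟩, hleft, x⁻¹ * s, hright, t, ht, by simp [mul_assoc]⟩
    · obtain ⟨p, hp, hleft, hright⟩ := hcutT t ht _ hx
      exact ⟨_, .inr ⟨p, hp, rfl⟩, ⟨s, hs, _, hleft, by simp⟩, by simpa [mul_assoc] using hright⟩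

theorem closure (hE : IsCocycle₁ E) (hS : HasFiniteCuts E S) :
    HasFiniteCuts E (Submonoid.closure S : Set G) := by
  obtain ⟨𝓢, h𝓢, hmul, hcut⟩ := hS
  let C := Submonoid.closure S
  refine ⟨(fun p => ((C : Set G) * p.1, p.2 * (C : Set G))) '' 𝓢, h𝓢.image _, ?_, ?_⟩
  · rintro _ ⟨p, hp, rfl⟩ _ ⟨_, ⟨u, hu, y, hy, rfl⟩, _, ⟨z, hz, v, hv, rfl⟩, rfl⟩
    have hyz : y * z ∈ C := Submonoid.subset_closure (hmul p hp ⟨y, hy, z, hz, rfl⟩)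
    simpa [mul_assoc] using mul_mem (mul_mem hu hyz) hv
  · intro g hg x hx
    obtain ⟨u, hu, s, hs, v, hv, rfl, hmem⟩ := exists_mul_mul_eq_of_mem_closure hE hg hx
    obtain ⟨p, hp, hleft, hright⟩ := hcut s hs _ hmem
    exact ⟨_, ⟨p, hp, rfl⟩, ⟨u, hu, _, hleft, by simp⟩, _, hright, v, hv, by simp [mul_assoc]⟩

end HasFiniteCuts

theorem IsRational.hasFiniteCuts (hS : IsRational S) (hE : IsCocycle₁ E) : HasFiniteCuts E S := by
  induction hS with
  | finite S hS => exact .of_finite E hS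
  | union _ _ hS hT => exact hS.union hT
  | mul _ _ hS hT => exact hS.mul hE hT
  | star _ hS => exact hS.closure hE

theorem IsRational.exists_mul_inv_mul_mem (hS : IsRational S) (hE : IsCocycle₁ E) :
    ∃ N : ℕ, ∀ g ∈ S, ∀ s ⊆ (E g).support, N < s.card →
      ∃ x ∈ s, ∃ y ∈ s, x ≠ y ∧ y * x⁻¹ * g ∈ S ∧ x * y⁻¹ * g ∈ S := by
  obtain ⟨𝓒, h𝓒, hmul, hcut⟩ := hS.hasFiniteCuts hE
  refine ⟨h𝓒.toFinset.card, fun g hg s hs hcard => ?_⟩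
  choose! p hp hleft hright using hcut g hg
  obtain ⟨x, hx, y, hy, hxy, heq⟩ := Finset.exists_ne_map_eq_of_card_lt_of_maps_to hcard
    fun x hx => h𝓒.mem_toFinset.mpr (hp x (hs hx))
  have swap_mem : ∀ {x y}, x ∈ s → y ∈ s → p x = p y → y * x⁻¹ * g ∈ S := fun {x y} hx hy heq =>
    hmul _ (hp y (hs hy)) ⟨y, hleft y (hs hy), x⁻¹ * g, heq ▸ hright x (hs hx), by
      simp only [mul_assoc]⟩
  exact ⟨x, hx, y, hy, hxy, swap_mem hx hy heq, swap_mem hy hx heq.symm⟩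

end Cuts

theorem IsRational.image {M N : Type*} [Monoid M] [Monoid N] (f : M →* N) {s : Set M}
    (hs : IsRational s) : IsRational (f '' s) := by
  induction hs with
  | finite s h => exact .finite _ (h.image f)
  | union _ _ hs ht => exact Set.image_union f _ _ ▸ hs.union ht
  | mul _ _ hs ht => exact Set.image_mul f ▸ hs.mul ht
  | @star s _ hs =>
    rw [← Submonoid.coe_map, MonoidHom.map_mclosure]
    exact hs.star

section ExponentSums

@[simp] theorem expSum_one : expSum 1 = 0 := by simp [expSum]

@[simp] theorem expSum_of (i : ℕ) : expSum (FreeGroup.of i) = Finsupp.single i 1 := by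
  simp [expSum]

@[simp] theorem expSum_inv (w : FreeGroup ℕ) : expSum w⁻¹ = -expSum w := by simp [expSum]

@[simp] theorem expSum_mul (v w : FreeGroup ℕ) : expSum (v * w) = expSum v + expSum w := by
  simp [expSum]

theorem toAdd_map_eq_linearCombination_expSum {A : Type*} [AddCommGroup A]
    (ψ : FreeGroup ℕ →* Multiplicative A) (w : FreeGroup ℕ) :
    (ψ w).toAdd = Finsupp.linearCombination ℤ (fun i => (ψ (FreeGroup.of i)).toAdd) (expSum w) := by
  induction w using FreeGroup.induction_on with
  | C1 => simp
  | of i => simp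
  | inv_of i _ => simp
  | mul v w hv hw => rw [map_mul, toAdd_mul, hv, hw, expSum_mul, map_add]

theorem eWord_dvd_expSum (w : FreeGroup ℕ) (i : ℕ) : (eWord w : ℤ) ∣ expSum w i := by
  by_cases hi : i ∈ (expSum w).support
  · exact Int.natCast_dvd.mpr (Finset.gcd_dvd hi)
  · simp [Finsupp.notMem_support_iff.mp hi]

theorem expSum_eq_zero_of_eWord_eq_zero {w : FreeGroup ℕ} (hw : eWord w = 0) : expSum w = 0 :=
  Finsupp.ext fun i => by simpa [hw] using eWord_dvd_expSum w i

theorem exists_linearCombination_expSum_eq_eWord (w : FreeGroup ℕ) :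
    ∃ c : ℕ → ℤ, Finsupp.linearCombination ℤ c (expSum w) = eWord w := by
  obtain ⟨c, hc⟩ := Finset.gcd_eq_sum_mul (expSum w).support (expSum w)
  obtain ⟨m, hm⟩ : (expSum w).support.gcd (expSum w) ∣ (eWord w : ℤ) := by
    rw [← Int.natAbs_dvd, Int.natCast_dvd_natCast]
    exact Finset.dvd_gcd fun i hi => Int.natAbs_dvd_natAbs.mpr (Finset.gcd_dvd hi)
  refine ⟨fun i => c i * m, ?_⟩
  simp only [hm, hc, Finset.sum_mul, Finsupp.linearCombination_apply, Finsupp.sum, smul_eq_mul,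
    mul_assoc]

end ExponentSums

section VerbalSets

variable {G H : Type*} [Group G] [Group H]

theorem pow_eWord_mem_verbalSet (w : FreeGroup ℕ) (g : G) : g ^ eWord w ∈ verbalSet w G := by
  obtain ⟨c, hc⟩ := exists_linearCombination_expSum_eq_eWord w
  let ψ : FreeGroup ℕ →* Multiplicative ℤ := FreeGroup.lift fun i => Multiplicative.ofAdd (c i)
  have hψ : (ψ w).toAdd = eWord w := by
    rw [toAdd_map_eq_linearCombination_expSum, ← hc]
    simp [ψ]
  exact ⟨(zpowersHom G g).comp ψ, by simp [zpowersHom_apply, hψ]⟩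

theorem conj_mem_verbalSet {w : FreeGroup ℕ} {g : G} (hg : g ∈ verbalSet w G) (x : G) :
    x * g * x⁻¹ ∈ verbalSet w G := by
  obtain ⟨φ, rfl⟩ := hg
  exact ⟨(MulAut.conj x).toMonoidHom.comp φ, by simp⟩

theorem image_verbalSet (w : FreeGroup ℕ) {f : G →* H} (hf : Function.Surjective f) :
    f '' verbalSet w G = verbalSet w H := by
  ext h
  constructor
  · rintro ⟨_, ⟨φ, rfl⟩, rfl⟩
    exact ⟨f.comp φ, rfl⟩
  · rintro ⟨φ, rfl⟩
    choose g hg using fun i => hf (φ (FreeGroup.of i))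
    have lift_eq : f.comp (FreeGroup.lift g) = φ := by ext i; simp [hg]
    exact ⟨_, ⟨FreeGroup.lift g, rfl⟩, DFunLike.congr_fun lift_eq w⟩

theorem map_eq_one_of_mem_verbalSet {w : FreeGroup ℕ} (hw : eWord w = 0) {A : Type*}
    [AddCommGroup A] (f : G →* Multiplicative A) {g : G} (hg : g ∈ verbalSet w G) : f g = 1 := by
  obtain ⟨φ, rfl⟩ := hg
  have heval := toAdd_map_eq_linearCombination_expSum (f.comp φ) w
  rw [expSum_eq_zero_of_eWord_eq_zero hw, map_zero] at heval
  exact toAdd_eq_zero.mp heval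

theorem IsProperWord.ne_one {w : FreeGroup ℕ} (hw : IsProperWord w) : w ≠ 1 := by
  rintro rfl
  obtain ⟨G, _, H, _, hG, -⟩ := hw
  refine hG (Set.eq_singleton_iff_unique_mem.mpr ⟨⟨1, map_one _⟩, ?_⟩)
  rintro _ ⟨φ, rfl⟩
  exact map_one φ

theorem IsProperWord.eWord_ne_one {w : FreeGroup ℕ} (hw : IsProperWord w) : eWord w ≠ 1 := by
  obtain ⟨G, _, H, _, -, hH⟩ := hw
  refine fun he => hH (Set.eq_univ_of_forall fun g => ?_)
  simpa [he] using pow_eWord_mem_verbalSet w g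

end VerbalSets

section QuasiHoms

variable {G ι : Type*} [Group G]

theorem card_support_add_le {R : Type*} [AddCommMonoid R] (x y : ι →₀ R) :
    (x + y).support.card ≤ x.support.card + y.support.card := by
  classical
  exact (Finset.card_le_card Finsupp.support_add).trans (Finset.card_union_le _ _)

theorem card_support_sub_le {R : Type*} [AddCommGroup R] (x y : ι →₀ R) :
    (x - y).support.card ≤ x.support.card + y.support.card := by
  rw [sub_eq_add_neg, ← Finsupp.support_neg y]
  exact card_support_add_le x (-y)

theorem exists_card_support_map_sub_linearCombination_le {R : Type*} [AddCommGroup R]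
    {ψ : G → ι →₀ R} {K : ℕ} (hψ : ∀ g h, (ψ (g * h) - ψ g - ψ h).support.card ≤ K)
    (w : FreeGroup ℕ) :
    ∃ L : ℕ, ∀ φ : FreeGroup ℕ →* G,
      (ψ (φ w) - Finsupp.linearCombination ℤ (fun i => ψ (φ (FreeGroup.of i)))
        (expSum w)).support.card ≤ L := by
  have hone : (ψ 1).support.card ≤ K := by simpa using hψ 1 1
  induction w using FreeGroup.induction_on with
  | C1 => exact ⟨K, fun φ => by simpa using hone⟩
  | of i => exact ⟨0, fun φ => by simp⟩
  | inv_of i _ =>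
    refine ⟨K + K, fun φ => ?_⟩
    have hdefect (g : G) : ψ g⁻¹ + ψ g = ψ 1 - (ψ (g * g⁻¹) - ψ g - ψ g⁻¹) := by
      rw [mul_inv_cancel]; abel
    rw [expSum_inv, expSum_of, map_neg, Finsupp.linearCombination_single, one_smul, sub_neg_eq_add,
      map_inv, hdefect]
    exact (card_support_sub_le _ _).trans (add_le_add hone (hψ _ _))
  | mul v w hv hw =>
    obtain ⟨L, hL⟩ := hv
    obtain ⟨M, hM⟩ := hw
    refine ⟨K + L + M, fun φ => ?_⟩
    set Λ := Finsupp.linearCombination ℤ fun i => ψ (φ (FreeGroup.of i))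
    have hdefect : ψ (φ (v * w)) - Λ (expSum (v * w)) = (ψ (φ v * φ w) - ψ (φ v) - ψ (φ w)) +
        (ψ (φ v) - Λ (expSum v)) + (ψ (φ w) - Λ (expSum w)) := by
      rw [map_mul, expSum_mul, map_add]; abel
    rw [hdefect]
    exact (card_support_add_le _ _).trans
      (add_le_add ((card_support_add_le _ _).trans (add_le_add (hψ _ _) (hL φ))) (hM φ))

theorem exists_card_le_of_forall_not_eWord_dvd {ψ : G → ι →₀ ℤ} {K : ℕ}
    (hψ : ∀ g h, (ψ (g * h) - ψ g - ψ h).support.card ≤ K) (w : FreeGroup ℕ) :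
    ∃ L : ℕ, ∀ g ∈ verbalSet w G, ∀ s : Finset ι, (∀ k ∈ s, ¬ (eWord w : ℤ) ∣ ψ g k) →
      s.card ≤ L := by
  obtain ⟨L, hL⟩ := exists_card_support_map_sub_linearCombination_le hψ w
  refine ⟨L, ?_⟩
  rintro _ ⟨φ, rfl⟩ s hs
  refine (Finset.card_le_card fun k hk => Finsupp.mem_support_iff.mpr fun hzero => hs k hk ?_).trans
    (hL φ)
  rw [Finsupp.sub_apply, sub_eq_zero] at hzero
  rw [hzero, Finsupp.linearCombination_apply, Finsupp.sum_apply]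
  exact Finset.dvd_sum fun i _ => (eWord_dvd_expSum w i).mul_right _

end QuasiHoms

section Quotients

theorem exists_surjective_addMonoidHom_int (A : Type*) [AddCommGroup A] [AddGroup.FG A]
    [Infinite A] : ∃ f : A →+ ℤ, Function.Surjective f := by
  have : Module.Finite ℤ A := Module.Finite.iff_addGroup_fg.mpr ‹_›
  let Q := A ⧸ Submodule.torsion ℤ A
  have : Nontrivial Q := by
    refine Submodule.Quotient.nontrivial_iff.mpr fun htop => ?_
    have := Module.finite_of_fg_torsion A ((Submodule.isTorsion'_iff_torsion'_eq_top _).mpr htop)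
    exact not_finite A
  let b := Module.Free.chooseBasis ℤ Q
  obtain ⟨i⟩ := b.index_nonempty
  refine ⟨((b.coord i).comp (Submodule.torsion ℤ A).mkQ).toAddMonoidHom, ?_⟩
  have coord_surjective : Function.Surjective (b.coord i) := fun k => ⟨k • b i, by simp⟩
  exact coord_surjective.comp (Submodule.mkQ_surjective _)

theorem exists_surjective_monoidHom_int (G : Type*) [Group G] [Group.FG G]
    [Infinite (Abelianization G)] : ∃ f : G →* Multiplicative ℤ, Function.Surjective f := by
  have : Group.FG (Abelianization G) :=
    Group.fg_of_surjective (f := Abelianization.of) QuotientGroup.mk_surjective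
  have : Infinite (Additive (Abelianization G)) := ‹_›
  obtain ⟨f, hf⟩ := exists_surjective_addMonoidHom_int (Additive (Abelianization G))
  exact ⟨(AddMonoidHom.toMultiplicativeRight f).comp Abelianization.of,
    hf.comp QuotientGroup.mk_surjective⟩

theorem exists_surjective_coprod_freeGroup {C D : Type*} [Group C] [Group D]
    {f : C →* Multiplicative ℤ} (hf : Function.Surjective f)
    {g : D →* Multiplicative ℤ} (hg : Function.Surjective g) :
    ∃ F : Monoid.Coprod C D →* FreeGroup Bool, Function.Surjective F := by
  refine ⟨Monoid.Coprod.lift ((zpowersHom _ (FreeGroup.of true)).comp f)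
    ((zpowersHom _ (FreeGroup.of false)).comp g), ?_⟩
  rw [← MonoidHom.range_eq_top, eq_top_iff, ← FreeGroup.closure_range_of, Subgroup.closure_le]
  rintro _ ⟨_ | _, rfl⟩
  · obtain ⟨d, hd⟩ := hg (Multiplicative.ofAdd 1)
    exact ⟨Monoid.Coprod.inr d, by simp [hd, zpowersHom_apply]⟩
  · obtain ⟨c, hc⟩ := hf (Multiplicative.ofAdd 1)
    exact ⟨Monoid.Coprod.inl c, by simp [hc, zpowersHom_apply]⟩

/-- The conjugates `bⁱ * a * b⁻ⁱ` are free: if `b` acts on `FreeGroup ℤ` by shifting the generators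
and `a` is the generator `0`, they become distinct generators. -/
theorem exists_injective_freeGroup_nat (α : Type*) [Nontrivial α] :
    ∃ φ : FreeGroup ℕ →* FreeGroup α, Function.Injective φ := by
  classical
  obtain ⟨a, b, hab⟩ := exists_pair_ne α
  let σ : Multiplicative ℤ →* MulAut (FreeGroup ℤ) :=
    zpowersHom _ (FreeGroup.freeGroupCongr (Equiv.addRight (1 : ℤ)))
  let F : FreeGroup α →* FreeGroup ℤ ⋊[σ] Multiplicative ℤ :=
    FreeGroup.lift (Function.update (fun _ => SemidirectProduct.inr (Multiplicative.ofAdd 1)) a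
      (SemidirectProduct.inl (FreeGroup.of 0)))
  let φ : FreeGroup ℕ →* FreeGroup α :=
    FreeGroup.lift fun i => FreeGroup.of b ^ i * FreeGroup.of a * (FreeGroup.of b ^ i)⁻¹
  have hσ (i : ℕ) : σ (Multiplicative.ofAdd 1 ^ i) (FreeGroup.of 0) = FreeGroup.of (i : ℤ) := by
    induction i with
    | zero => simp
    | succ i ih => rw [pow_succ', map_mul, MulAut.mul_apply, ih]; simp [σ, zpowersHom_apply]
  have hFφ : F.comp φ = SemidirectProduct.inl.comp (FreeGroup.map ((↑) : ℕ → ℤ)) := by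
    ext1 i
    have ha : F (FreeGroup.of a) = SemidirectProduct.inl (FreeGroup.of 0) := by simp [F]
    have hb : F (FreeGroup.of b) = SemidirectProduct.inr (Multiplicative.ofAdd 1) := by
      simp [F, hab.symm]
    simp only [MonoidHom.comp_apply, φ, FreeGroup.lift_apply_of, FreeGroup.map.of, map_mul, map_pow,
      map_inv, ha, hb]
    rw [← hσ, SemidirectProduct.inl_aut, map_inv, map_pow]
  have hinj : Function.Injective (F.comp φ) := by
    rw [hFφ]
    exact SemidirectProduct.inl_injective.comp (FreeGroup.map_injective Nat.cast_injective)
  exact ⟨φ, hinj.of_comp (f := F)⟩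

end Quotients

section FoxCalculus

variable {α A : Type*}

section FreeCocycle

variable [AddCommGroup A] [DistribMulAction (FreeGroup α) A]

/-- The homomorphism `g ↦ (D g, g)` into the semidirect product attached to the 1-cocycle `D` with
prescribed values on the generators. -/
def freeCocycleHom (t : α → A) :
    FreeGroup α →*
      Multiplicative A ⋊[(MulAutMultiplicative A).symm.toMonoidHom.comp
        (DistribMulAction.toAddAut (FreeGroup α) A)] FreeGroup α :=
  FreeGroup.lift fun i => ⟨Multiplicative.ofAdd (t i), FreeGroup.of i⟩

@[simp] theorem freeCocycleHom_of (t : α → A) (i : α) :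
    freeCocycleHom t (FreeGroup.of i) = ⟨Multiplicative.ofAdd (t i), FreeGroup.of i⟩ :=
  FreeGroup.lift_apply_of

theorem freeCocycleHom_right (t : α → A) (g : FreeGroup α) : (freeCocycleHom t g).right = g := by
  have hright : SemidirectProduct.rightHom.comp (freeCocycleHom t) = MonoidHom.id _ := by
    ext i
    exact congrArg SemidirectProduct.right (freeCocycleHom_of t i)
  exact DFunLike.congr_fun hright g

/-- The 1-cocycle of a free group with prescribed values on the generators. -/
def freeCocycle (t : α → A) (g : FreeGroup α) : A := (freeCocycleHom t g).left.toAdd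

@[simp] theorem freeCocycle_of (t : α → A) (i : α) : freeCocycle t (FreeGroup.of i) = t i := by
  rw [freeCocycle, freeCocycleHom_of, toAdd_ofAdd]

theorem isCocycle₁_freeCocycle (t : α → A) : IsCocycle₁ (freeCocycle t) := fun g h => by
  rw [add_comm, freeCocycle, map_mul, SemidirectProduct.mul_left, freeCocycleHom_right]
  rfl

end FreeCocycle

theorem forall_of_forall_mul_of_iff {P : FreeGroup α → Prop} {x₀ : FreeGroup α} (h₀ : P x₀)
    (hmul : ∀ x i, P (x * FreeGroup.of i) ↔ P x) (x : FreeGroup α) : P x := by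
  have hmul' : ∀ y x, P (x * y) ↔ P x := by
    intro y
    induction y using FreeGroup.induction_on with
    | C1 => simp
    | of i => exact fun x => hmul x i
    | inv_of i _ => exact fun x => by simpa using (hmul (x * (FreeGroup.of i)⁻¹) i).symm
    | mul y z hy hz => exact fun x => by rw [← mul_assoc, hz, hy]
  simpa using (hmul' (x₀⁻¹ * x) x₀).mpr h₀

open Classical in
/-- The Fox derivative `∂g/∂a` in `ℤ[F]`: its coefficient at `x` is the signed number of times that
the path of `g` in the Cayley tree crosses the edge from `x` to `x * a`. -/
noncomputable def foxDerivative (a : α) : FreeGroup α → FreeGroup α →₀ ℤ :=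
  freeCocycle (Pi.single a (Finsupp.single 1 1))

variable {a b : α}

theorem isCocycle₁_foxDerivative (a : α) : IsCocycle₁ (foxDerivative a) :=
  isCocycle₁_freeCocycle _

theorem foxDerivative_of_self (a : α) : foxDerivative a (FreeGroup.of a) = Finsupp.single 1 1 := by
  simp [foxDerivative]

theorem foxDerivative_of_ne (hb : b ≠ a) : foxDerivative a (FreeGroup.of b) = 0 := by
  simp [foxDerivative, hb]

theorem foxDerivative_mul_of_apply_one_of_ne {g : FreeGroup α} {i : α}
    (h : i ≠ a ∨ g ≠ 1) :
    foxDerivative a (g * FreeGroup.of i) 1 = foxDerivative a g 1 := by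
  rw [isCocycle₁_foxDerivative, Finsupp.add_apply, Finsupp.comapSMul_apply]
  obtain rfl | hi := eq_or_ne i a
  · have hg : g ≠ 1 := by simpa using h
    simp [foxDerivative_of_self, hg]
  · simp [foxDerivative_of_ne hi]

theorem foxDerivative_apply_one_eq_zero_or_one (a : α) (g : FreeGroup α) :
    foxDerivative a g 1 = 0 ∨ foxDerivative a g 1 = 1 := by
  have hone := map_one_of_isCocycle₁ (isCocycle₁_foxDerivative a)
  refine forall_of_forall_mul_of_iff
    (P := fun g => foxDerivative a g 1 = 0 ∨ foxDerivative a g 1 = 1) (x₀ := 1) (by simp [hone])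
    (fun x i => ?_) g
  by_cases h : i = a ∧ x = 1
  · obtain ⟨rfl, rfl⟩ := h
    simp [hone, foxDerivative_of_self]
  · rw [foxDerivative_mul_of_apply_one_of_ne (not_and_or.mp h)]

theorem abs_foxDerivative_apply_le_one (a : α) (g x : FreeGroup α) :
    |foxDerivative a g x| ≤ 1 := by
  have hsplit : foxDerivative a g x = foxDerivative a (x⁻¹ * g) 1 - foxDerivative a x⁻¹ 1 := by
    rw [isCocycle₁_foxDerivative]
    simp
  rcases foxDerivative_apply_one_eq_zero_or_one a (x⁻¹ * g) with h | h <;>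
    rcases foxDerivative_apply_one_eq_zero_or_one a x⁻¹ with h' | h' <;>
      simp [hsplit, h, h']

end FoxCalculus

section Syllables

variable {α : Type*} {a b : α}

/-- The cosets of `⟨a⟩` in the free group, that is, the `a`-labelled lines of its Cayley tree. -/
abbrev GeneratorLine (a : α) : Type _ := FreeGroup α ⧸ Subgroup.zpowers (FreeGroup.of a)

theorem coe_mul_of_zpow (a : α) (x : FreeGroup α) (n : ℤ) :
    ((x * FreeGroup.of a ^ n : FreeGroup α) : GeneratorLine a) = x :=
  QuotientGroup.mk_mul_of_mem x (Subgroup.zpow_mem_zpowers _ n)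

theorem coe_eq_coe_one_iff {x : FreeGroup α} :
    (x : GeneratorLine a) = (1 : FreeGroup α) ↔ x ∈ Subgroup.zpowers (FreeGroup.of a) := by
  rw [eq_comm, QuotientGroup.eq, inv_one, one_mul]

/-- The image of `∂g/∂a` in `ℤ[F ⧸ ⟨a⟩]`: its coefficient at a line is the exponent of the syllable
`aᵏ` that the path of `g` traverses within that line, and `0` if there is none. -/
noncomputable def syllableExponent (a : α) (g : FreeGroup α) : GeneratorLine a →₀ ℤ :=
  (foxDerivative a g).mapDomain (↑)

theorem isCocycle₁_syllableExponent (a : α) : IsCocycle₁ (syllableExponent a) := fun g h => by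
  simp only [syllableExponent, isCocycle₁_foxDerivative a g h, Finsupp.mapDomain_add,
    Finsupp.comapSMul_def, ← Finsupp.mapDomain_comp]
  rfl

theorem syllableExponent_mul_apply (a : α) (g h : FreeGroup α) (c : GeneratorLine a) :
    syllableExponent a (g * h) c = syllableExponent a g c + syllableExponent a h (g⁻¹ • c) := by
  rw [isCocycle₁_syllableExponent, add_comm, Finsupp.add_apply, Finsupp.comapSMul_apply]

@[simp] theorem syllableExponent_one (a : α) : syllableExponent a 1 = 0 :=
  map_one_of_isCocycle₁ (isCocycle₁_syllableExponent a)

theorem syllableExponent_mul_of_of_ne (hb : b ≠ a) (x : FreeGroup α) :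
    syllableExponent a (x * FreeGroup.of b) = syllableExponent a x := by
  rw [isCocycle₁_syllableExponent, syllableExponent, foxDerivative_of_ne hb, Finsupp.mapDomain_zero,
    smul_zero, zero_add]

theorem syllableExponent_mul_of_self (a : α) (x : FreeGroup α) :
    syllableExponent a (x * FreeGroup.of a) =
      syllableExponent a x + Finsupp.single (x : GeneratorLine a) 1 := by
  rw [isCocycle₁_syllableExponent, add_comm]
  simp [syllableExponent, foxDerivative_of_self]

theorem syllableExponent_mul_of_zpow (a : α) (x : FreeGroup α) (n : ℤ) :
    syllableExponent a (x * FreeGroup.of a ^ n) =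
      syllableExponent a x + Finsupp.single (x : GeneratorLine a) n := by
  induction n using Int.induction_on with
  | zero => simp
  | succ n ih =>
    rw [zpow_add_one, ← mul_assoc, syllableExponent_mul_of_self, ih, coe_mul_of_zpow,
      Finsupp.single_add, add_assoc]
  | pred n ih =>
    have hstep := syllableExponent_mul_of_self a (x * FreeGroup.of a ^ (-(n : ℤ) - 1))
    rw [mul_assoc, ← zpow_add_one, sub_add_cancel, ih, coe_mul_of_zpow] at hstep
    rw [eq_sub_of_add_eq hstep.symm, Finsupp.single_sub, add_sub_assoc]

theorem syllableExponent_of_zpow (a : α) (n : ℤ) :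
    syllableExponent a (FreeGroup.of a ^ n) =
      Finsupp.single ((1 : FreeGroup α) : GeneratorLine a) n := by
  simpa using syllableExponent_mul_of_zpow a 1 n

theorem syllableExponent_apply_eq_of_coe_eq {x y : FreeGroup α} (hxy : (x : GeneratorLine a) = y)
    {c : GeneratorLine a} (hc : (x : GeneratorLine a) ≠ c) :
    syllableExponent a x c = syllableExponent a y c := by
  obtain ⟨n, hn⟩ := Subgroup.mem_zpowers_iff.mp (QuotientGroup.eq.mp hxy)
  obtain rfl : y = x * FreeGroup.of a ^ n := by simp [hn]
  simp [syllableExponent_mul_of_zpow, hc]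

/-- Two disjoint lines of a tree are separated by an edge outside them, and `x` sees the line on the
far side of that edge from the same point as the other line does. -/
theorem syllableExponent_apply_eq_or_apply_eq {p q : FreeGroup α}
    (hpq : (p : GeneratorLine a) ≠ q) (x : FreeGroup α) :
    syllableExponent a x p = syllableExponent a q p ∨
      syllableExponent a x q = syllableExponent a p q := by
  refine forall_of_forall_mul_of_iff
    (P := fun x => syllableExponent a x p = syllableExponent a q p ∨
      syllableExponent a x q = syllableExponent a p q) (x₀ := p) (.inr rfl) (fun x i => ?_) x
  obtain rfl | hi := eq_or_ne i a
  · have hx : ((x * FreeGroup.of i : FreeGroup α) : GeneratorLine i) = x := by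
      simp [QuotientGroup.mk_mul_of_mem]
    by_cases hxp : (x : GeneratorLine i) = p
    · exact iff_of_true
        (.inr (syllableExponent_apply_eq_of_coe_eq (hx.trans hxp) (by rwa [hx, hxp])))
        (.inr (syllableExponent_apply_eq_of_coe_eq hxp (hxp ▸ hpq)))
    by_cases hxq : (x : GeneratorLine i) = q
    · exact iff_of_true
        (.inl (syllableExponent_apply_eq_of_coe_eq (hx.trans hxq) (by rwa [hx, hxq, ne_comm])))
        (.inl (syllableExponent_apply_eq_of_coe_eq hxq (hxq ▸ hpq.symm)))
    simp [syllableExponent_mul_of_self, hxp, hxq]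
  · rw [syllableExponent_mul_of_of_ne hi]

/-- Such a line passes through the centre of the tripod spanned by `1`, `g` and `g * h`: it is where
a syllable of `g` and one of `h` merge into a new syllable. -/
theorem subsingleton_setOf_syllableExponent_branch (a : α) (g h : FreeGroup α) :
    {c | syllableExponent a g c ≠ 0 ∧ (g • syllableExponent a h) c ≠ 0 ∧
      syllableExponent a g c + (g • syllableExponent a h) c ≠ 0}.Subsingleton := by
  rintro c ⟨hgc, hhc, hghc⟩ d ⟨hgd, hhd, hghd⟩
  obtain ⟨p, rfl⟩ := QuotientGroup.mk_surjective c
  obtain ⟨q, rfl⟩ := QuotientGroup.mk_surjective d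
  by_contra hpq
  have hone := syllableExponent_apply_eq_or_apply_eq hpq 1
  have hg := syllableExponent_apply_eq_or_apply_eq hpq g
  have hgh := syllableExponent_apply_eq_or_apply_eq hpq (g * h)
  simp only [syllableExponent_one, Finsupp.zero_apply] at hone
  simp only [isCocycle₁_syllableExponent a g h, Finsupp.add_apply] at hgh
  omega

end Syllables

section SyllableCount

theorem exists_sum_add_eq_of_subsingleton {X A : Type*} [AddCommGroup A] {f : ℤ → A}
    (hzero : f 0 = 0) (hneg : ∀ n, f (-n) = -f n) {x y : X →₀ ℤ}
    (hxy : {c | x c ≠ 0 ∧ y c ≠ 0 ∧ x c + y c ≠ 0}.Subsingleton) :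
    ∃ m n, ((x + y).sum fun _ => f) - (x.sum fun _ => f) - (y.sum fun _ => f) =
      f (m + n) - f m - f n := by
  classical
  have hterm : ∀ m n, ¬ (m ≠ 0 ∧ n ≠ 0 ∧ m + n ≠ 0) → f (m + n) - f m - f n = 0 := by
    intro m n hmn
    obtain rfl | rfl | rfl : m = 0 ∨ n = 0 ∨ n = -m := by omega
    all_goals simp [hzero, hneg]
  let s := x.support ∪ y.support
  have hsum : ((x + y).sum fun _ => f) - (x.sum fun _ => f) - (y.sum fun _ => f) =
      ∑ c ∈ s, (f (x c + y c) - f (x c) - f (y c)) := by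
    have hsum_eq {z : X →₀ ℤ} (hz : z.support ⊆ s) : (z.sum fun _ => f) = ∑ c ∈ s, f (z c) :=
      z.sum_of_support_subset hz _ fun _ _ => hzero
    rw [hsum_eq Finsupp.support_add, hsum_eq Finset.subset_union_left,
      hsum_eq Finset.subset_union_right]
    simp only [Finsupp.add_apply, Finset.sum_sub_distrib]
  rw [hsum]
  rcases hxy.eq_empty_or_singleton with hempty | ⟨c, hc⟩
  · exact ⟨0, 0, by
      rw [Finset.sum_eq_zero fun c _ => hterm _ _ (Set.eq_empty_iff_forall_notMem.mp hempty c)]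
      simp [hzero]⟩
  · refine ⟨x c, y c,
      Finset.sum_eq_single c (fun d _ hd => hterm _ _ fun hmem => hd ?_) fun hcs => ?_⟩
    · exact (Set.ext_iff.mp hc d).mp hmem
    · exact absurd (Finset.mem_union_left _ (Finsupp.mem_support_iff.mpr (hc.ge rfl).1)) hcs

variable {α : Type*}

/-- The vector of all Rolli quasimorphisms of the free group: the coefficient at `k > 0` is the
number of syllables `aᵏ` minus the number of syllables `a⁻ᵏ` in the reduced word of `g`. -/
noncomputable def syllableCount (a : α) (g : FreeGroup α) : ℕ →₀ ℤ :=
  (syllableExponent a g).sum fun _ n => Finsupp.single n.natAbs n.sign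

theorem card_support_syllableCount_defect_le (a : α) (g h : FreeGroup α) :
    (syllableCount a (g * h) - syllableCount a g - syllableCount a h).support.card ≤ 3 := by
  let f : ℤ → ℕ →₀ ℤ := fun n => Finsupp.single n.natAbs n.sign
  have hcard (n : ℤ) : (f n).support.card ≤ 1 :=
    (Finset.card_le_card Finsupp.support_single_subset).trans_eq (Finset.card_singleton _)
  have htranslate : syllableCount a h = (g • syllableExponent a h).sum fun _ => f := by
    rw [Finsupp.comapSMul_def, Finsupp.sum_mapDomain_index_inj (MulAction.injective g)]
    rfl
  obtain ⟨m, n, hmn⟩ := exists_sum_add_eq_of_subsingleton (f := f) (by simp [f]) (by simp [f])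
    (subsingleton_setOf_syllableExponent_branch a g h)
  rw [htranslate, syllableCount, syllableCount, isCocycle₁_syllableExponent, add_comm, hmn]
  exact (card_support_sub_le _ _).trans
    (add_le_add ((card_support_sub_le _ _).trans (add_le_add (hcard _) (hcard _))) (hcard _))

end SyllableCount

section FreeGroup

variable {α : Type*} {a b : α} {S : Set (FreeGroup α)}

theorem exists_subset_support_abs_syllableExponent_le_card (a : α) (g p : FreeGroup α) :
    ∃ s ⊆ (foxDerivative a g).support, (∀ x ∈ s, (x : GeneratorLine a) = p) ∧
      |syllableExponent a g p| ≤ s.card := by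
  classical
  refine ⟨{x ∈ (foxDerivative a g).support | (x : GeneratorLine a) = p}, Finset.filter_subset _ _,
    fun x hx => (Finset.mem_filter.mp hx).2, ?_⟩
  rw [syllableExponent, Finsupp.mapDomain_apply_eq_sum]
  simpa using (Finset.abs_sum_le_sum_abs _ _).trans
    (Finset.sum_le_card_nsmul _ _ 1 fun x _ => abs_foxDerivative_apply_le_one a g x)

theorem IsRational.exists_conj_pow_mul_mem (hS : IsRational S) (a : α) :
    ∃ N : ℕ, ∀ g ∈ S, ∀ p : FreeGroup α, N < |syllableExponent a g p| →
      ∃ d > 0, p * FreeGroup.of a ^ d * p⁻¹ * g ∈ S := by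
  obtain ⟨N, hN⟩ := hS.exists_mul_inv_mul_mem (isCocycle₁_foxDerivative a)
  refine ⟨N, fun g hg p hp => ?_⟩
  obtain ⟨s, hs, hline, hcard⟩ := exists_subset_support_abs_syllableExponent_le_card a g p
  obtain ⟨x, hx, y, hy, hxy, hyx_mem, hxy_mem⟩ := hN g hg s hs (by omega)
  have hpow : ∀ z ∈ s, ∃ n : ℤ, p * FreeGroup.of a ^ n = z := fun z hz => by
    obtain ⟨n, hn⟩ := Subgroup.mem_zpowers_iff.mp (QuotientGroup.eq.mp (hline z hz).symm)
    exact ⟨n, by simp [hn]⟩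
  obtain ⟨m, rfl⟩ := hpow x hx
  obtain ⟨n, rfl⟩ := hpow y hy
  have hmn : m ≠ n := fun h => hxy (h ▸ rfl)
  have hquot (m n : ℤ) : p * FreeGroup.of a ^ m * (p * FreeGroup.of a ^ n)⁻¹ * g =
      p * FreeGroup.of a ^ (m - n) * p⁻¹ * g := by
    group
  rw [hquot] at hyx_mem hxy_mem
  refine ⟨(m - n).natAbs, by omega, ?_⟩
  rw [← zpow_natCast]
  rcases Int.natAbs_eq (m - n) with h | h
  · rwa [← h]
  · rwa [← neg_eq_iff_eq_neg.mpr h, neg_sub]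

/-- The exponent sum of the generator `a`, as a homomorphism to `ℤ`. -/
noncomputable def exponentHom (a : α) : FreeGroup α →* Multiplicative ℤ :=
  open Classical in FreeGroup.lift (Pi.mulSingle a (Multiplicative.ofAdd 1))

@[simp] theorem exponentHom_of_self (a : α) :
    exponentHom a (FreeGroup.of a) = Multiplicative.ofAdd 1 := by
  simp [exponentHom]

theorem exponentHom_of_ne (hb : b ≠ a) : exponentHom a (FreeGroup.of b) = 1 := by
  simp [exponentHom, hb]

theorem IsRational.eq_one_of_forall_conj_mem (hS : IsRational S)
    (hconj : ∀ g ∈ S, ∀ x, x * g * x⁻¹ ∈ S) (hexp : ∀ g ∈ S, exponentHom a g = 1)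
    {g : FreeGroup α} (hg : g ∈ S) : g = 1 := by
  obtain ⟨N, hN⟩ := hS.exists_conj_pow_mul_mem a
  by_cases hmem : g ∈ Subgroup.zpowers (FreeGroup.of a)
  · obtain ⟨n, rfl⟩ := Subgroup.mem_zpowers_iff.mp hmem
    have hn : n = 0 := by simpa [← ofAdd_zsmul] using hexp _ hg
    rw [hn, zpow_zero]
  let n : ℤ := N + 1 + |syllableExponent a g (1 : FreeGroup α)|
  have hline : ((FreeGroup.of a ^ n * g : FreeGroup α) : GeneratorLine a) ≠ (1 : FreeGroup α) := by
    rwa [ne_eq, coe_eq_coe_one_iff,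
      Subgroup.mul_mem_cancel_left _ (Subgroup.zpow_mem_zpowers _ n)]
  have hfix : (FreeGroup.of a ^ n)⁻¹ • ((1 : FreeGroup α) : GeneratorLine a) =
      (1 : FreeGroup α) := by
    simp [coe_eq_coe_one_iff]
  have hlong : syllableExponent a (FreeGroup.of a ^ n * g * (FreeGroup.of a ^ n)⁻¹)
      (1 : FreeGroup α) = n + syllableExponent a g (1 : FreeGroup α) := by
    rw [← zpow_neg, syllableExponent_mul_of_zpow, Finsupp.add_apply,
      Finsupp.single_eq_of_ne hline.symm, add_zero, syllableExponent_mul_apply,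
      syllableExponent_of_zpow, Finsupp.single_eq_same, hfix]
  obtain ⟨d, hd, hpump⟩ := hN _ (hconj g hg (FreeGroup.of a ^ n)) 1 (by
    rw [hlong]
    have := neg_abs_le (syllableExponent a g (1 : FreeGroup α))
    exact lt_abs.mpr (.inl (by omega)))
  have hzero : d = 0 := by
    simpa [hexp g hg, ← ofAdd_nsmul] using hexp _ hpump
  omega

theorem not_isRational_verbalSet_of_eWord_eq_zero [Nontrivial α] {w : FreeGroup ℕ} (hw : w ≠ 1)
    (he : eWord w = 0) : ¬ IsRational (verbalSet w (FreeGroup α)) := by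
  intro hS
  obtain ⟨φ, hφ⟩ := exists_injective_freeGroup_nat α
  obtain ⟨a⟩ : Nonempty α := inferInstance
  have hone : φ w = 1 := hS.eq_one_of_forall_conj_mem (fun g hg x => conj_mem_verbalSet hg x)
    (fun g hg => map_eq_one_of_mem_verbalSet he (exponentHom a) hg) ⟨φ, rfl⟩
  exact hw (hφ (hone.trans (map_one φ).symm))

/-- The positive word `a ^ n₁ * b * a ^ n₂ * b * ⋯` whose `a`-syllables have the prescribed lengths
`n₁, n₂, …`; a length may be `0`. -/
def syllableWord (a b : α) (l : List ℕ) : FreeGroup α :=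
  (l.map fun n => FreeGroup.of a ^ n * FreeGroup.of b).prod

@[simp] theorem syllableWord_nil (a b : α) : syllableWord a b [] = 1 := rfl

theorem syllableWord_cons (a b : α) (n : ℕ) (l : List ℕ) :
    syllableWord a b (n :: l) = FreeGroup.of a ^ n * FreeGroup.of b * syllableWord a b l := by
  simp [syllableWord]

theorem syllableWord_append (a b : α) (l m : List ℕ) :
    syllableWord a b (l ++ m) = syllableWord a b l * syllableWord a b m := by
  simp [syllableWord]

theorem syllableWord_replicate (a b : α) (m n : ℕ) :
    syllableWord a b (List.replicate m n) = (FreeGroup.of a ^ n * FreeGroup.of b) ^ m := by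
  simp [syllableWord]

theorem exponentHom_syllableWord (hab : a ≠ b) (l : List ℕ) :
    exponentHom b (syllableWord a b l) = Multiplicative.ofAdd (l.length : ℤ) := by
  induction l with
  | nil => simp
  | cons n l ih =>
    simp [syllableWord_cons, exponentHom_of_ne hab, ih, ← ofAdd_add, add_comm]

theorem syllableExponent_syllableWord_cons (hab : a ≠ b) (n : ℕ) (l : List ℕ) :
    syllableExponent a (syllableWord a b (n :: l)) =
      Finsupp.single ((1 : FreeGroup α) : GeneratorLine a) (n : ℤ) +
        (FreeGroup.of a ^ n * FreeGroup.of b) • syllableExponent a (syllableWord a b l) := by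
  rw [syllableWord_cons, isCocycle₁_syllableExponent, syllableExponent_mul_of_of_ne hab.symm,
    ← zpow_natCast, syllableExponent_of_zpow, add_comm]

theorem exponentHom_mem_Ico_of_syllableExponent_ne_zero (hab : a ≠ b) (l : List ℕ)
    {z : FreeGroup α} (hz : syllableExponent a (syllableWord a b l) z ≠ 0) :
    (exponentHom b z).toAdd ∈ Set.Ico (0 : ℤ) l.length := by
  induction l generalizing z with
  | nil => simp at hz
  | cons n l ih =>
    rw [syllableExponent_syllableWord_cons hab, Finsupp.add_apply] at hz
    by_cases hone : (z : GeneratorLine a) = (1 : FreeGroup α)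
    · obtain ⟨k, rfl⟩ := Subgroup.mem_zpowers_iff.mp (coe_eq_coe_one_iff.mp hone)
      simp [exponentHom_of_ne hab]
    · rw [Finsupp.single_eq_of_ne hone, zero_add, Finsupp.comapSMul_apply] at hz
      have hshift : (exponentHom b ((FreeGroup.of a ^ n * FreeGroup.of b)⁻¹ * z)).toAdd =
          (exponentHom b z).toAdd - 1 := by
        simp [exponentHom_of_ne hab, sub_eq_neg_add]
      have hIco : (exponentHom b z).toAdd - 1 ∈ Set.Ico (0 : ℤ) l.length := hshift ▸ ih hz
      rw [Set.mem_Ico] at hIco ⊢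
      rw [List.length_cons]
      omega

theorem syllableExponent_syllableWord_apply_inv (hab : a ≠ b) (l : List ℕ) (n : ℕ) :
    syllableExponent a (syllableWord a b l)
      ((FreeGroup.of a ^ n * FreeGroup.of b)⁻¹ : FreeGroup α) = 0 := by
  by_contra hne
  have hIco := exponentHom_mem_Ico_of_syllableExponent_ne_zero hab l hne
  simp [exponentHom_of_ne hab] at hIco

theorem syllableExponent_syllableWord_append_cons_apply (hab : a ≠ b) (l m : List ℕ) (n : ℕ) :
    syllableExponent a (syllableWord a b (l ++ n :: m)) (syllableWord a b l) = n := by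
  have hprefix : syllableExponent a (syllableWord a b l) (syllableWord a b l) = 0 := by
    by_contra hne
    have hIco := exponentHom_mem_Ico_of_syllableExponent_ne_zero hab l hne
    simp [exponentHom_syllableWord hab] at hIco
  rw [syllableWord_append, syllableExponent_mul_apply, hprefix, MulAction.Quotient.smul_coe,
    smul_eq_mul, inv_mul_cancel, syllableExponent_syllableWord_cons hab, Finsupp.add_apply,
    Finsupp.single_eq_same, Finsupp.comapSMul_apply, MulAction.Quotient.smul_coe, smul_eq_mul,
    mul_one, syllableExponent_syllableWord_apply_inv hab, zero_add, add_zero]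

theorem syllableCount_syllableWord_apply (hab : a ≠ b) {k : ℕ} (hk : k ≠ 0) (l : List ℕ) :
    syllableCount a (syllableWord a b l) k = l.count k := by
  induction l with
  | nil => simp [syllableCount]
  | cons n l ih =>
    have hdisj : Disjoint (Finsupp.single ((1 : FreeGroup α) : GeneratorLine a) (n : ℤ)).support
        ((FreeGroup.of a ^ n * FreeGroup.of b) •
          syllableExponent a (syllableWord a b l)).support := by
      refine Finset.disjoint_of_subset_left Finsupp.support_single_subset ?_
      rw [Finset.disjoint_singleton_left, Finsupp.notMem_support_iff, Finsupp.comapSMul_apply,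
        MulAction.Quotient.smul_coe, smul_eq_mul, mul_one,
        syllableExponent_syllableWord_apply_inv hab]
    rw [syllableCount, syllableExponent_syllableWord_cons hab,
      Finsupp.sum_add_index_of_disjoint hdisj, Finsupp.sum_single_index (by simp),
      Finsupp.comapSMul_def, Finsupp.sum_mapDomain_index_inj (MulAction.injective _),
      ← syllableCount, Finsupp.add_apply, ih, List.count_cons]
    rcases eq_or_ne n k with rfl | hnk
    · simp [Int.sign_natCast_of_ne_zero hk, add_comm]
    · simp [hnk]

theorem IsRational.exists_infinite_setOf_syllableWord_mem (hS : IsRational S) (hab : a ≠ b) :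
    ∃ N : ℕ, ∀ l n m, N < n → syllableWord a b (l ++ n :: m) ∈ S →
      {k | N < k ∧ syllableWord a b (l ++ k :: m) ∈ S}.Infinite := by
  obtain ⟨N, hN⟩ := hS.exists_conj_pow_mul_mem a
  refine ⟨N, fun l n m hn hmem hfin => ?_⟩
  obtain ⟨k, ⟨hk, hkS⟩, hmax⟩ := hfin.exists_maximal ⟨n, hn, hmem⟩
  obtain ⟨d, hd, hpump⟩ := hN _ hkS (syllableWord a b l)
    (by simpa [syllableExponent_syllableWord_append_cons_apply hab] using hk)
  have hword : syllableWord a b l * FreeGroup.of a ^ d * (syllableWord a b l)⁻¹ *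
      syllableWord a b (l ++ k :: m) = syllableWord a b (l ++ (d + k) :: m) := by
    simp only [syllableWord_append, syllableWord_cons, pow_add]
    group
  have hle : d + k ≤ k := hmax ⟨by omega, hword ▸ hpump⟩ (by omega)
  omega

theorem IsRational.exists_nodup_syllableWord_mem (hS : IsRational S) (hab : a ≠ b) :
    ∃ n : ℕ, ∀ M m, syllableWord a b (List.replicate M n ++ m) ∈ S →
      ∃ l : List ℕ, l.length = M ∧ l.Nodup ∧ 0 ∉ l ∧ syllableWord a b (l ++ m) ∈ S := by
  obtain ⟨N, hN⟩ := hS.exists_infinite_setOf_syllableWord_mem hab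
  refine ⟨N + 1, fun M => ?_⟩
  induction M with
  | zero => exact fun m hm => ⟨[], rfl, List.nodup_nil, by simp, hm⟩
  | succ M ih =>
    intro m hm
    rw [List.replicate_succ', List.append_assoc, List.singleton_append] at hm
    obtain ⟨l, hlen, hnodup, hl0, hlS⟩ := ih _ hm
    obtain ⟨k, ⟨hk, hkS⟩, hkl⟩ := (hN l _ m N.lt_succ_self hlS).exists_notMem_finset l.toFinset
    refine ⟨l ++ [k], by simp [hlen], ?_, ?_, by simpa using hkS⟩
    · simpa [List.nodup_append, hnodup] using fun x hx hxk => hkl (by simpa [← hxk] using hx)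
    · simpa [hl0] using (Nat.zero_le N).trans_lt hk |>.ne

theorem not_isRational_verbalSet_of_two_le_eWord [Nontrivial α] {w : FreeGroup ℕ}
    (hw : 2 ≤ eWord w) : ¬ IsRational (verbalSet w (FreeGroup α)) := by
  intro hS
  obtain ⟨a, b, hab⟩ := exists_pair_ne α
  obtain ⟨L, hL⟩ :=
    exists_card_le_of_forall_not_eWord_dvd (card_support_syllableCount_defect_le a) w
  obtain ⟨n, hn⟩ := hS.exists_nodup_syllableWord_mem hab
  have hpower : syllableWord a b (List.replicate ((L + 1) * eWord w) n ++ []) ∈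
      verbalSet w (FreeGroup α) := by
    rw [List.append_nil, syllableWord_replicate, pow_mul]
    exact pow_eWord_mem_verbalSet w _
  obtain ⟨l, hlen, hnodup, hl0, hmem⟩ := hn _ _ hpower
  have hcard := hL _ hmem l.toFinset fun k hk hdvd => by
    rw [List.mem_toFinset] at hk
    rw [List.append_nil, syllableCount_syllableWord_apply hab (ne_of_mem_of_not_mem hk hl0),
      List.count_eq_one_of_mem hnodup hk] at hdvd
    have := Nat.dvd_one.mp (Int.natCast_dvd_natCast.mp hdvd)
    omega
  rw [List.toFinset_card_of_nodup hnodup, hlen] at hcard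
  have : (L + 1) * 1 ≤ (L + 1) * eWord w := Nat.mul_le_mul_left _ (by omega)
  omega

theorem not_isRational_verbalSet_freeGroup [Nontrivial α] {w : FreeGroup ℕ}
    (hw : IsProperWord w) : ¬ IsRational (verbalSet w (FreeGroup α)) := by
  have hne := hw.eWord_ne_one
  rcases Nat.eq_zero_or_pos (eWord w) with hzero | hpos
  · exact not_isRational_verbalSet_of_eWord_eq_zero hw.ne_one hzero
  · exact not_isRational_verbalSet_of_two_le_eWord (by omega)

end FreeGroup

/-- If `H = C ∗ D` with `C, D` finitely generated groups with infinite
abelianizations, then no proper verbal set is rational in `H`. -/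
theorem stmt_19 {C D : Type*} [Group C] [Group D] [Group.FG C] [Group.FG D]
    (hC : Infinite (Abelianization C)) (hD : Infinite (Abelianization D)) :
    ∀ w : FreeGroup ℕ, IsProperWord w → ¬ IsRational (verbalSet w (Monoid.Coprod C D)) := by
  intro w hw hS
  obtain ⟨f, hf⟩ := exists_surjective_monoidHom_int C
  obtain ⟨g, hg⟩ := exists_surjective_monoidHom_int D
  obtain ⟨F, hF⟩ := exists_surjective_coprod_freeGroup hf hg
  refine not_isRational_verbalSet_freeGroup (α := Bool) hw ?_
  rw [← image_verbalSet w hF]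
  exact hS.image F
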